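/- Let 𝕏 be a σ-finite measure space and ℳ a Banach L^0(𝕏)-module. For every f = (f_v)_{v∈𝕊_ℳ} ∈ ℓ₁(𝕊_ℳ, L^0(𝕏)) the family {f_v·v}_{v∈𝕊_ℳ} is summable in ℳ, and the map φ : ℓ₁(𝕊_ℳ, L^0(𝕏)) → ℳ defined by φ(f) := Σ_{v∈𝕊_ℳ} f_v·v is a quotient operator; in particular, ℳ is isomorphic as a Banach L^0(𝕏)-module to the quotient ℓ₁(𝕊_ℳ, L^0(𝕏))/ker(φ). -/

import Mathlib

/-!
`φ f = ∑ f_v • v` is norm-decreasing because `|v| ≤ 1` on the unit sphere, and it is a quotient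
operator because every `w` has a *norm-attaining* preimage supported at a single point: the polar
decomposition `w = |w| • v` with `v = |w|⁻¹ • w` in the sphere gives the family equal to `|w|` at
`v` and to `0` elsewhere.

A sum in the sense of `HasSumMod` is an order limit of the net of finite partial sums. With
`b = |f|₁`, two partial sums over `F ⊆ G` differ in norm by at most `b - ∑_{v ∈ F} |f_v|`, which
decreases to `0`, so summability reduces to order completeness of `ℳ`. The measure enters here:
the infimum of a directed family in `L⁰` is also the limit in measure of a sequence of its members,
which turns order Cauchy nets into Cauchy sequences.
-/

open MeasureTheory Filter Set TensorProduct

noncomputable section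

namespace Paper

variable {X : Type*} [MeasurableSpace X]

/-- The space `L⁰(𝕏)` of real-valued measurable functions up to `μ`-a.e. equality. -/
abbrev L0 (μ : Measure X) : Type _ := X →ₘ[μ] ℝ

instance (μ : Measure X) : CommRing (L0 μ) :=
  { (inferInstance : AddCommGroup (L0 μ)), (inferInstance : CommMonoid (L0 μ)) with
    left_distrib := fun a b c => AEEqFun.toGerm_injective <| by
      simp only [AEEqFun.mul_toGerm, AEEqFun.add_toGerm, mul_add]
    right_distrib := fun a b c => AEEqFun.toGerm_injective <| by
      simp only [AEEqFun.mul_toGerm, AEEqFun.add_toGerm, add_mul]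
    zero_mul := fun a => AEEqFun.toGerm_injective <| by
      simp only [AEEqFun.mul_toGerm, AEEqFun.zero_toGerm, zero_mul]
    mul_zero := fun a => AEEqFun.toGerm_injective <| by
      simp only [AEEqFun.mul_toGerm, AEEqFun.zero_toGerm, mul_zero] }

/-- The distance on `L⁰(𝕏)` inducing the topology of convergence in measure, defined through
the auxiliary finite measure `μ.toFinite` (which satisfies `μ ≪ μ.toFinite ≪ μ`). -/
noncomputable def dL0 (μ : Measure X) [SFinite μ] (f g : L0 μ) : ℝ :=
  ∫ x, min |f x - g x| 1 ∂(μ.toFinite)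

/-- A Banach `L⁰(𝕏)`-module: a module over `L⁰(𝕏)` endowed with a pointwise norm, complete
with respect to the induced distance. -/
class BanachMod (μ : Measure X) [SFinite μ] (M : Type*) [AddCommGroup M]
    [Module (L0 μ) M] where
  pn : M → L0 μ
  pn_nonneg : ∀ v : M, 0 ≤ pn v
  pn_eq_zero : ∀ v : M, pn v = 0 ↔ v = 0
  pn_add_le : ∀ v w : M, pn (v + w) ≤ pn v + pn w
  pn_smul : ∀ (f : L0 μ) (v : M), pn (f • v) = |f| * pn v
  complete : ∀ u : ℕ → M,
    (∀ ε : ℝ, 0 < ε → ∃ N : ℕ, ∀ m ≥ N, ∀ n ≥ N, dL0 μ (pn (u m - u n)) 0 < ε) →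
    ∃ v : M, Tendsto (fun n => dL0 μ (pn (u n - v)) 0) atTop (nhds 0)

/-- The pointwise norm of a Banach `L⁰(𝕏)`-module, with the measure explicit. -/
noncomputable def pn (μ : Measure X) [SFinite μ] {M : Type*} [AddCommGroup M]
    [Module (L0 μ) M] [BanachMod μ M] (v : M) : L0 μ :=
  BanachMod.pn v

/-- The distance on a Banach `L⁰(𝕏)`-module. -/
noncomputable def dM (μ : Measure X) [SFinite μ] {M : Type*} [AddCommGroup M]
    [Module (L0 μ) M] [BanachMod μ M] (v w : M) : ℝ :=
  dL0 μ (pn μ (v - w)) 0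

section Defs

variable (μ : Measure X) [SFinite μ]
variable {M N : Type*} [AddCommGroup M] [Module (L0 μ) M] [BanachMod μ M]
  [AddCommGroup N] [Module (L0 μ) N] [BanachMod μ N]

/-- The set of admissible bounds of a map between Banach `L⁰(𝕏)`-modules; the pointwise norm
`|T|` of a homomorphism is the infimum of this set. -/
def homBddSet (T : M → N) : Set (L0 μ) :=
  {g | 0 ≤ g ∧ ∀ v, pn μ (T v) ≤ g * pn μ v}

/-- A homomorphism of Banach `L⁰(𝕏)`-modules: an `L⁰(𝕏)`-linear map admitting a bound
`g ∈ L⁰(𝕏)⁺` with `|T v| ≤ g |v|` (equivalently, `L⁰(𝕏)`-linear and continuous). -/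
def IsHom (T : M →ₗ[L0 μ] N) : Prop :=
  ∃ g, g ∈ homBddSet μ (⇑T)

/-- The set of admissible bounds of an `L⁰(𝕏)`-valued map (for elements of the dual module). -/
def dualBddSet (ω : M → L0 μ) : Set (L0 μ) :=
  {g | 0 ≤ g ∧ ∀ v, |ω v| ≤ g * pn μ v}

/-- Membership in the dual module `ℳ*`: an `L⁰(𝕏)`-linear map `ω : ℳ → L⁰(𝕏)` admitting a
bound `g ∈ L⁰(𝕏)⁺` with `|ω v| ≤ g |v|`. -/
def IsDual (ω : M →ₗ[L0 μ] L0 μ) : Prop :=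
  ∃ g, g ∈ dualBddSet μ (⇑ω)

/-- Membership in the unit disc `𝔻_{ℳ*}` of the dual module: `|ω| ≤ 1`, equivalently
`|ω v| ≤ |v|` for every `v`. -/
def InDualDisc (ω : M →ₗ[L0 μ] L0 μ) : Prop :=
  ∀ v, |ω v| ≤ pn μ v

/-- The family of pointwise norms `|s - ∑_{i ∈ F ∪ G} v i|` for `G` finite disjoint from `F`,
whose `F`-indexed inf-sup being `0` defines `s = ∑_{i∈I} v i`. -/
def sumUB {I : Type*} (v : I → M) (s : M) (F : Finset I) : Set (L0 μ) :=
  {g | ∃ G : Finset I, Disjoint G F ∧ g = pn μ (s - (∑ i ∈ F, v i + ∑ i ∈ G, v i))}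

/-- `HasSumMod μ v s` means that the family `{v_i}` is summable in the Banach `L⁰(𝕏)`-module
with sum `s`, i.e. `⋀_F ⋁_G |s - ∑_{i ∈ F ∪ G} v_i| = 0` (the inner suprema being the values
of `b`, and the outer infimum being `0`). -/
def HasSumMod {I : Type*} (v : I → M) (s : M) : Prop :=
  ∃ b : Finset I → L0 μ, (∀ F, IsLUB (sumUB μ v s F) (b F)) ∧ IsGLB (Set.range b) 0

/-- A family in a Banach `L⁰(𝕏)`-module is summable if it has a sum. -/
def SummableMod {I : Type*} (v : I → M) : Prop :=
  ∃ s, HasSumMod μ v s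

/-- The partial sums `∑_{i ∈ F} |v i|` of the pointwise norms of a family; the element `|v|₁`
of `ℓ₁(I, ℳ)` is the supremum of this set. -/
def l1PartialSums {I : Type*} (v : I → M) : Set (L0 μ) :=
  {g | ∃ F : Finset I, g = ∑ i ∈ F, pn μ (v i)}

/-- Membership in `ℓ₁(I, ℳ)`: the partial sums of the pointwise norms admit a supremum
(equivalently, an upper bound) in `L⁰(𝕏)`. -/
def Meml1 {I : Type*} (v : I → M) : Prop :=
  ∃ b, IsLUB (l1PartialSums μ v) b

/-- The partial sums `∑_{i ∈ F} |v i|` for an `L⁰(𝕏)`-valued family. -/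
def l1PartialSumsF {I : Type*} (v : I → L0 μ) : Set (L0 μ) :=
  {g | ∃ F : Finset I, g = ∑ i ∈ F, |v i|}

/-- Membership in `ℓ₁(I, L⁰(𝕏))`. -/
def Meml1F {I : Type*} (v : I → L0 μ) : Prop :=
  ∃ b, IsLUB (l1PartialSumsF μ v) b

/-- The set whose infimum defines the projective pointwise norm: all values
`∑_{i=1}^n |v_i||w_i|` over representations `α = ∑_{i=1}^n v_i ⊗ w_i`. -/
def piReps (α : M ⊗[L0 μ] N) : Set (L0 μ) :=
  {g | ∃ (n : ℕ) (v : Fin n → M) (w : Fin n → N),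
    α = ∑ i, v i ⊗ₜ[L0 μ] w i ∧ g = ∑ i, pn μ (v i) * pn μ (w i)}

/-- The set whose supremum defines the injective pointwise norm: all values
`|∑_{i=1}^n ω(v_i) η(w_i)|` over representations `α = ∑_{i=1}^n v_i ⊗ w_i` and elements
`ω ∈ 𝔻_{ℳ*}`, `η ∈ 𝔻_{𝒩*}`. -/
def epsReps (α : M ⊗[L0 μ] N) : Set (L0 μ) :=
  {g | ∃ (n : ℕ) (v : Fin n → M) (w : Fin n → N)
    (ω : M →ₗ[L0 μ] L0 μ) (η : N →ₗ[L0 μ] L0 μ), InDualDisc μ ω ∧ InDualDisc μ η ∧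
    α = ∑ i, v i ⊗ₜ[L0 μ] w i ∧ g = |∑ i, ω (v i) * η (w i)|}

/-- `IsPiTensor μ M N P e` states that the Banach `L⁰(𝕏)`-module `P`, together with the
`L⁰(𝕏)`-linear map `e` defined on the algebraic tensor product, realizes the projective
tensor product `ℳ ⊗̂_π 𝒩`: the pointwise norm of `e α` is the projective pointwise norm
`|α|_π` and the image of `e` is dense. -/
structure IsPiTensor (M N P : Type*) [AddCommGroup M] [Module (L0 μ) M] [BanachMod μ M]
    [AddCommGroup N] [Module (L0 μ) N] [BanachMod μ N]
    [AddCommGroup P] [Module (L0 μ) P] [BanachMod μ P]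
    (e : M ⊗[L0 μ] N →ₗ[L0 μ] P) : Prop where
  pn_emb : ∀ α : M ⊗[L0 μ] N, IsGLB (piReps μ α) (pn μ (e α))
  dense : ∀ p : P, ∀ ε : ℝ, 0 < ε → ∃ α : M ⊗[L0 μ] N, dM μ (e α) p < ε

/-- `IsEpsTensor μ M N P e` states that the Banach `L⁰(𝕏)`-module `P`, together with the
`L⁰(𝕏)`-linear map `e` defined on the algebraic tensor product, realizes the injective
tensor product `ℳ ⊗̂_ε 𝒩`: the pointwise norm of `e α` is the injective pointwise norm
`|α|_ε` and the image of `e` is dense. -/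
structure IsEpsTensor (M N P : Type*) [AddCommGroup M] [Module (L0 μ) M] [BanachMod μ M]
    [AddCommGroup N] [Module (L0 μ) N] [BanachMod μ N]
    [AddCommGroup P] [Module (L0 μ) P] [BanachMod μ P]
    (e : M ⊗[L0 μ] N →ₗ[L0 μ] P) : Prop where
  pn_emb : ∀ α : M ⊗[L0 μ] N, IsLUB (epsReps μ α) (pn μ (e α))
  dense : ∀ p : P, ∀ ε : ℝ, 0 < ε → ∃ α : M ⊗[L0 μ] N, dM μ (e α) p < ε

end Defs

open scoped Topology

section Order

theorem exists_monotone_ge {ι : Type*} [Preorder ι] [IsDirectedOrder ι] (u : ℕ → ι) :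
    ∃ i : ℕ → ι, Monotone i ∧ ∀ n, u n ≤ i n := by
  choose ub le_ub_left le_ub_right using exists_ge_ge (α := ι)
  let i : ℕ → ι := fun n => n.rec (u 0) fun n a => ub a (u (n + 1))
  refine ⟨i, monotone_nat_of_le_succ fun n => le_ub_left _ _, fun n => ?_⟩
  cases n with
  | zero => exact le_refl (u 0)
  | succ n => exact le_ub_right _ _

theorem isGLB_range_add_of_antitone {α ι : Type*} [AddCommGroup α] [PartialOrder α]
    [IsOrderedAddMonoid α] [Preorder ι] [IsDirectedOrder ι] {c d : ι → α} {a b : α}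
    (hc : Antitone c) (hd : Antitone d) (ha : IsGLB (range c) a) (hb : IsGLB (range d) b) :
    IsGLB (range fun i => c i + d i) (a + b) := by
  refine ⟨?_, fun l hl => (ha.add hb).2 ?_⟩
  · rintro _ ⟨i, rfl⟩
    exact add_le_add (ha.1 ⟨i, rfl⟩) (hb.1 ⟨i, rfl⟩)
  · rintro _ ⟨_, ⟨i, rfl⟩, _, ⟨j, rfl⟩, rfl⟩
    obtain ⟨k, hik, hjk⟩ := exists_ge_ge i j
    exact (hl ⟨k, rfl⟩).trans (add_le_add (hc hik) (hd hjk))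

theorem isGLB_range_const_sub {α ι : Type*} [AddCommGroup α] [PartialOrder α]
    [IsOrderedAddMonoid α] {S : ι → α} {b : α} (hS : IsLUB (range S) b) :
    IsGLB (range fun i => b - S i) 0 := by
  simpa only [singleton_sub, ← range_comp, Function.comp_def, sub_self] using
    (isGLB_singleton (a := b)).sub hS

end Order

namespace L0

section Algebra

variable {μ : Measure X}

instance : IsOrderedRing (L0 μ) :=
  Function.Injective.isOrderedRing AEEqFun.toGerm AEEqFun.zero_toGerm AEEqFun.one_toGerm
    AEEqFun.add_toGerm AEEqFun.mul_toGerm Iff.rfl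

theorem le_one_of_mul_self_eq {p : L0 μ} (hp : p * p = p) : p ≤ 1 := by
  rw [← AEEqFun.coeFn_le]
  filter_upwards [AEEqFun.coeFn_mul p p, AEEqFun.coeFn_one (β := ℝ) (μ := μ)] with x hmul hone
  rw [hp, Pi.mul_apply] at hmul
  rw [hone, Pi.one_apply]
  nlinarith [sq_nonneg (p x - 1)]

/-- The pointwise inverse of an element of `L⁰(𝕏)`, equal to `0` where the function vanishes. -/
instance : Inv (L0 μ) := ⟨fun f => f.compMeasurable (·⁻¹) measurable_inv⟩

theorem coeFn_inv (f : L0 μ) : ⇑f⁻¹ =ᵐ[μ] fun x => (f x)⁻¹ :=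
  AEEqFun.coeFn_compMeasurable _ _ f

protected theorem inv_nonneg {f : L0 μ} (hf : 0 ≤ f) : 0 ≤ f⁻¹ := by
  rw [← AEEqFun.coeFn_le] at hf ⊢
  filter_upwards [hf, coeFn_inv f, AEEqFun.coeFn_zero (β := ℝ) (μ := μ)] with x hfx hinv hzero
  rw [hzero] at hfx ⊢
  rw [hinv]
  exact inv_nonneg.2 hfx

protected theorem mul_inv_mul_cancel (f : L0 μ) : f * f⁻¹ * f = f := by
  refine AEEqFun.ext ?_
  filter_upwards [AEEqFun.coeFn_mul (f * f⁻¹) f, AEEqFun.coeFn_mul f f⁻¹, coeFn_inv f]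
    with x hmul₁ hmul₂ hinv
  rw [hmul₁, Pi.mul_apply, hmul₂, Pi.mul_apply, hinv, mul_inv_mul_cancel]

theorem mul_inv_cancel_of_one_le {f : L0 μ} (hf : 1 ≤ f) : f * f⁻¹ = 1 := by
  refine AEEqFun.ext ?_
  rw [← AEEqFun.coeFn_le] at hf
  filter_upwards [hf, AEEqFun.coeFn_mul f f⁻¹, coeFn_inv f, AEEqFun.coeFn_one (β := ℝ) (μ := μ)]
    with x hfx hmul hinv hone
  rw [hone, Pi.one_apply] at hfx
  rw [hmul, Pi.mul_apply, hinv, hone, Pi.one_apply, mul_inv_cancel₀ (by linarith)]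

theorem isGLB_range_const_mul {ι : Type*} {c : ι → L0 μ} (hc : IsGLB (range c) 0) {g : L0 μ}
    (hg : 0 ≤ g) : IsGLB (range fun i => g * c i) 0 := by
  have hc_nonneg : ∀ i, 0 ≤ c i := fun i => hc.1 ⟨i, rfl⟩
  refine ⟨?_, fun l hl => ?_⟩
  · rintro _ ⟨i, rfl⟩
    exact mul_nonneg hg (hc_nonneg i)
  · -- `g` need not be invertible, but `u = 1 + g ≥ g` is.
    set u : L0 μ := 1 + g
    have one_le_u : 1 ≤ u := le_add_of_nonneg_right hg
    have u_nonneg : 0 ≤ u := zero_le_one.trans one_le_u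
    have u_mul_inv : u * u⁻¹ = 1 := mul_inv_cancel_of_one_le one_le_u
    have inv_mul_le : u⁻¹ * l ≤ 0 := hc.2 <| by
      rintro _ ⟨i, rfl⟩
      calc u⁻¹ * l ≤ u⁻¹ * (g * c i) :=
            mul_le_mul_of_nonneg_left (hl ⟨i, rfl⟩) (L0.inv_nonneg u_nonneg)
        _ ≤ u⁻¹ * (u * c i) := mul_le_mul_of_nonneg_left
            (mul_le_mul_of_nonneg_right (le_add_of_nonneg_left zero_le_one) (hc_nonneg i))
            (L0.inv_nonneg u_nonneg)
        _ = c i := by rw [← mul_assoc, mul_comm u⁻¹, u_mul_inv, one_mul]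
    calc l = u * (u⁻¹ * l) := by rw [← mul_assoc, u_mul_inv, one_mul]
      _ ≤ 0 := mul_nonpos_of_nonneg_of_nonpos u_nonneg inv_mul_le

end Algebra

section Completeness

variable {μ : Measure X}

theorem exists_tendsto_of_monotone {g : ℕ → L0 μ} (hg : Monotone g) (hb : BddAbove (range g)) :
    ∃ f : L0 μ, ∀ᵐ x ∂μ, Tendsto (fun n => g n x) atTop (𝓝 (f x)) := by
  obtain ⟨b, hb⟩ := hb
  have hmono : ∀ᵐ x ∂μ, ∀ n, g n x ≤ g (n + 1) x :=
    ae_all_iff.2 fun n => AEEqFun.coeFn_le.2 (hg n.le_succ)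
  have hbdd : ∀ᵐ x ∂μ, ∀ n, g n x ≤ b x :=
    ae_all_iff.2 fun n => AEEqFun.coeFn_le.2 (hb ⟨n, rfl⟩)
  have hlim : ∀ᵐ x ∂μ, ∃ l, Tendsto (fun n => g n x) atTop (𝓝 l) := by
    filter_upwards [hmono, hbdd] with x hmx hbx
    exact ⟨_, tendsto_atTop_ciSup (monotone_nat_of_le_succ hmx) ⟨b x, forall_mem_range.2 hbx⟩⟩
  obtain ⟨f, hf, hgf⟩ := exists_stronglyMeasurable_limit_of_tendsto_ae
    (fun n => (g n).aestronglyMeasurable) hlim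
  refine ⟨AEEqFun.mk f hf.aestronglyMeasurable, ?_⟩
  filter_upwards [hgf, AEEqFun.coeFn_mk f hf.aestronglyMeasurable] with x hx hmk
  rwa [hmk]

theorem isLUB_range_of_tendsto {g : ℕ → L0 μ} (hg : Monotone g) {f : L0 μ}
    (h : ∀ᵐ x ∂μ, Tendsto (fun n => g n x) atTop (𝓝 (f x))) : IsLUB (range g) f := by
  constructor
  · rintro _ ⟨n, rfl⟩
    have hle : ∀ᵐ x ∂μ, ∀ m ≥ n, g n x ≤ g m x :=
      ae_all_iff.2 fun m => eventually_imp_distrib_left.2 fun hm => AEEqFun.coeFn_le.2 (hg hm)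
    rw [← AEEqFun.coeFn_le]
    filter_upwards [h, hle] with x hx hlex
    exact ge_of_tendsto hx (eventually_atTop.2 ⟨n, hlex⟩)
  · intro b hb
    have hle : ∀ᵐ x ∂μ, ∀ n, g n x ≤ b x :=
      ae_all_iff.2 fun n => AEEqFun.coeFn_le.2 (hb ⟨n, rfl⟩)
    rw [← AEEqFun.coeFn_le]
    filter_upwards [h, hle] with x hx hlex
    exact le_of_tendsto' hx hlex

variable [SFinite μ]

theorem integrable_comp {φ : ℝ → ℝ} (hφ : Continuous φ) {C : ℝ} (hC : ∀ t, ‖φ t‖ ≤ C)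
    (f : L0 μ) : Integrable (fun x => φ (f x)) μ.toFinite :=
  .of_bound (hφ.comp_aestronglyMeasurable
    (f.aestronglyMeasurable.mono_ac (toFinite_absolutelyContinuous μ))) C (.of_forall fun _ => hC _)

theorem tendsto_integral_comp {φ : ℝ → ℝ} (hφ : Continuous φ) {C : ℝ} (hC : ∀ t, ‖φ t‖ ≤ C)
    {g : ℕ → L0 μ} {f : L0 μ} (h : ∀ᵐ x ∂μ, Tendsto (fun n => g n x) atTop (𝓝 (f x))) :
    Tendsto (fun n => ∫ x, φ (g n x) ∂μ.toFinite) atTop (𝓝 (∫ x, φ (f x) ∂μ.toFinite)) := by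
  refine tendsto_integral_of_dominated_convergence (fun _ => C)
    (fun n => (integrable_comp hφ hC (g n)).aestronglyMeasurable) (integrable_const C)
    (fun n => .of_forall fun x => hC _) ?_
  rw [ae_toFinite]
  filter_upwards [h] with x hx
  exact (hφ.tendsto _).comp hx

/-- The functional `f ↦ ∫ arctan f`, a real-valued strictly increasing functional on all of
`L⁰(𝕏)`. Maximising it along a directed family produces the supremum of the family. -/
def arctanIntegral (f : L0 μ) : ℝ := ∫ x, Real.arctan (f x) ∂μ.toFinite

theorem norm_arctan_le (t : ℝ) : ‖Real.arctan t‖ ≤ Real.pi / 2 :=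
  abs_le.2 ⟨(Real.neg_pi_div_two_lt_arctan t).le, (Real.arctan_lt_pi_div_two t).le⟩

theorem integrable_arctan (f : L0 μ) : Integrable (fun x => Real.arctan (f x)) μ.toFinite :=
  integrable_comp Real.continuous_arctan norm_arctan_le f

theorem arctanIntegral_strictMono : StrictMono (arctanIntegral : L0 μ → ℝ) := by
  intro f g hfg
  have hle : (fun x => Real.arctan (f x)) ≤ᵐ[μ.toFinite] fun x => Real.arctan (g x) := by
    rw [EventuallyLE, ae_toFinite]
    filter_upwards [AEEqFun.coeFn_le.2 hfg.le] with x hx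
    exact Real.arctan_mono hx
  refine (integral_mono_ae (integrable_arctan f) (integrable_arctan g) hle).lt_of_ne fun heq =>
    hfg.ne (AEEqFun.ext ?_)
  have hae := (integral_eq_iff_of_ae_le (integrable_arctan f) (integrable_arctan g) hle).1 heq
  rw [EventuallyEq, ae_toFinite] at hae
  filter_upwards [hae] with x hx
  exact Real.arctan_injective hx

theorem bddAbove_range_arctanIntegral : BddAbove (range (arctanIntegral : L0 μ → ℝ)) := by
  refine ⟨∫ _, Real.pi / 2 ∂μ.toFinite, ?_⟩
  rintro _ ⟨f, rfl⟩
  exact integral_mono (integrable_arctan f) (integrable_const _)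
    fun x => (Real.arctan_lt_pi_div_two _).le

theorem tendsto_arctanIntegral {g : ℕ → L0 μ} {f : L0 μ}
    (h : ∀ᵐ x ∂μ, Tendsto (fun n => g n x) atTop (𝓝 (f x))) :
    Tendsto (fun n => arctanIntegral (g n)) atTop (𝓝 (arctanIntegral f)) :=
  tendsto_integral_comp Real.continuous_arctan norm_arctan_le h

theorem exists_isLUB_range_and_seq_tendsto {ι : Type*} [Preorder ι] [IsDirectedOrder ι]
    [Nonempty ι] {u : ι → L0 μ} (hu : Monotone u) (hb : BddAbove (range u)) :
    ∃ f : L0 μ, IsLUB (range u) f ∧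
      ∃ i : ℕ → ι, ∀ᵐ x ∂μ, Tendsto (fun n => u (i n) x) atTop (𝓝 (f x)) := by
  set A : ℝ := ⨆ i, arctanIntegral (u i)
  have bdd : BddAbove (range fun i => arctanIntegral (u i)) :=
    bddAbove_range_arctanIntegral.mono (range_comp_subset_range u arctanIntegral)
  obtain ⟨t, -, htA, ht⟩ := exists_seq_tendsto_sSup (range_nonempty _) bdd
  choose j hj using ht
  obtain ⟨i, hi, hji⟩ := exists_monotone_ge j
  obtain ⟨f, hf⟩ := exists_tendsto_of_monotone (hu.comp hi) (hb.mono (range_comp_subset_range i u))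
  have f_lub : IsLUB (range (u ∘ i)) f := isLUB_range_of_tendsto (hu.comp hi) hf
  have A_le : A ≤ arctanIntegral f := le_of_tendsto' htA fun n => (hj n).symm.trans_le <|
    arctanIntegral_strictMono.monotone ((hu (hji n)).trans (f_lub.1 ⟨n, rfl⟩))
  refine ⟨f, ⟨?_, fun b hb => f_lub.2 fun _ ⟨n, hn⟩ => hb ⟨i n, hn⟩⟩, i, hf⟩
  rintro _ ⟨k, rfl⟩
  have sup_tendsto : ∀ᵐ x ∂μ, Tendsto (fun n => (u (i n) ⊔ u k) x) atTop (𝓝 ((f ⊔ u k) x)) := by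
    filter_upwards [hf, AEEqFun.coeFn_sup f (u k),
      ae_all_iff.2 fun n => AEEqFun.coeFn_sup (u (i n)) (u k)] with x hx hsup hsups
    simp only [hsup, hsups]
    exact hx.sup_nhds tendsto_const_nhds
  have sup_le_A : arctanIntegral (f ⊔ u k) ≤ A := by
    refine le_of_tendsto' (tendsto_arctanIntegral sup_tendsto) fun n => ?_
    obtain ⟨m, hnm, hkm⟩ := exists_ge_ge (i n) k
    exact (arctanIntegral_strictMono.monotone (sup_le (hu hnm) (hu hkm))).trans (le_ciSup bdd m)
  by_contra hk
  exact (sup_le_A.trans A_le).not_gt (arctanIntegral_strictMono (left_lt_sup.2 hk))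

theorem exists_isLUB {S : Set (L0 μ)} (hne : S.Nonempty) (hb : BddAbove S) :
    ∃ f : L0 μ, IsLUB S f := by
  have : IsDirectedOrder (supClosure S) :=
    ⟨fun f g => ⟨⟨f ⊔ g, supClosed_supClosure f.2 g.2⟩, Subtype.coe_le_coe.1 le_sup_left,
      Subtype.coe_le_coe.1 le_sup_right⟩⟩
  have : Nonempty (supClosure S) := (hne.mono subset_supClosure).to_subtype
  obtain ⟨f, hf, -⟩ := exists_isLUB_range_and_seq_tendsto (u := ((↑) : supClosure S → L0 μ))
    (Subtype.mono_coe _) (by rwa [Subtype.range_coe, BddAbove, upperBounds_supClosure])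
  exact ⟨f, isLUB_supClosure.1 (by rwa [Subtype.range_coe] at hf)⟩

end Completeness

end L0

section Distance

variable {μ : Measure X} [SFinite μ]

theorem continuous_min_abs_one : Continuous fun t : ℝ => min |t| 1 := by fun_prop

theorem norm_min_abs_one_le (t : ℝ) : ‖min |t| 1‖ ≤ 1 := by
  rw [Real.norm_of_nonneg (by positivity)]
  exact min_le_right _ _

theorem dL0_zero_right (f : L0 μ) : dL0 μ f 0 = ∫ x, min |f x| 1 ∂μ.toFinite := by
  refine integral_congr_ae ?_
  rw [EventuallyEq, ae_toFinite]
  filter_upwards [AEEqFun.coeFn_zero (β := ℝ) (μ := μ)] with x hx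
  rw [hx, Pi.zero_apply, sub_zero]

theorem integrable_min_abs_one (f : L0 μ) : Integrable (fun x => min |f x| 1) μ.toFinite :=
  L0.integrable_comp continuous_min_abs_one norm_min_abs_one_le f

theorem dL0_nonneg (f g : L0 μ) : 0 ≤ dL0 μ f g := integral_nonneg fun _ => by positivity

theorem dL0_le_dL0_of_abs_le {f g : L0 μ} (h : |f| ≤ |g|) : dL0 μ f 0 ≤ dL0 μ g 0 := by
  rw [dL0_zero_right, dL0_zero_right]
  refine integral_mono_ae (integrable_min_abs_one f) (integrable_min_abs_one g) ?_
  rw [EventuallyLE, ae_toFinite]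
  filter_upwards [AEEqFun.coeFn_le.2 h, AEEqFun.coeFn_abs f, AEEqFun.coeFn_abs g] with x hx hf hg
  rw [hf, hg] at hx
  exact min_le_min_right 1 hx

theorem dL0_add_le (f g : L0 μ) : dL0 μ (f + g) 0 ≤ dL0 μ f 0 + dL0 μ g 0 := by
  simp only [dL0_zero_right]
  rw [← integral_add (integrable_min_abs_one f) (integrable_min_abs_one g)]
  refine integral_mono_ae (integrable_min_abs_one _)
    ((integrable_min_abs_one f).add (integrable_min_abs_one g)) ?_
  rw [EventuallyLE, ae_toFinite]
  filter_upwards [AEEqFun.coeFn_add f g] with x hx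
  rw [hx, Pi.add_apply]
  simp only [min_def]
  split_ifs <;> linarith [abs_add_le (f x) (g x), abs_nonneg (f x), abs_nonneg (g x)]

theorem eq_zero_of_dL0_eq_zero {f : L0 μ} (h : dL0 μ f 0 = 0) : f = 0 := by
  rw [dL0_zero_right, integral_eq_zero_iff_of_nonneg (fun _ => by positivity)
    (integrable_min_abs_one f), EventuallyEq, ae_toFinite] at h
  refine AEEqFun.ext ?_
  filter_upwards [h, AEEqFun.coeFn_zero (β := ℝ) (μ := μ)] with x hx hzero
  rw [hzero]
  by_contra hne
  exact (lt_min (abs_pos.2 hne) one_pos).ne' hx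

theorem tendsto_dL0_zero {g : ℕ → L0 μ} (h : ∀ᵐ x ∂μ, Tendsto (fun n => g n x) atTop (𝓝 0)) :
    Tendsto (fun n => dL0 μ (g n) 0) atTop (𝓝 0) := by
  have hzero : dL0 μ 0 0 = 0 := by simp [dL0]
  rw [← hzero]
  simp only [dL0_zero_right]
  refine L0.tendsto_integral_comp continuous_min_abs_one norm_min_abs_one_le ?_
  filter_upwards [h, AEEqFun.coeFn_zero (β := ℝ) (μ := μ)] with x hx hzero
  rwa [hzero]

theorem le_of_forall_le_add_of_tendsto_dL0 {a b : L0 μ} {h : ℕ → L0 μ} (hle : ∀ n, a ≤ b + h n)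
    (hh : Tendsto (fun n => dL0 μ (h n) 0) atTop (𝓝 0)) : a ≤ b := by
  have posPart_le : ∀ n, |(a - b)⁺| ≤ |h n| := fun n => by
    rw [abs_of_nonneg (posPart_nonneg _)]
    exact sup_le ((sub_le_iff_le_add'.2 (hle n)).trans (le_abs_self _)) (abs_nonneg _)
  have dL0_posPart : dL0 μ (a - b)⁺ 0 = 0 :=
    (ge_of_tendsto' hh fun n => dL0_le_dL0_of_abs_le (posPart_le n)).antisymm (dL0_nonneg _ _)
  exact sub_nonpos.1 (posPart_eq_zero.1 (eq_zero_of_dL0_eq_zero dL0_posPart))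

theorem exists_seq_tendsto_dL0_of_isGLB {ι : Type*} [Preorder ι] [IsDirectedOrder ι] [Nonempty ι]
    {c : ι → L0 μ} (hc : Antitone c) (h : IsGLB (range c) 0) :
    ∃ i : ℕ → ι, Tendsto (fun n => dL0 μ (c (i n)) 0) atTop (𝓝 0) := by
  have neg_lub : IsLUB (range fun i => -c i) 0 := by
    simpa only [neg_range, neg_zero] using h.neg
  obtain ⟨f, hf, i, hi⟩ := L0.exists_isLUB_range_and_seq_tendsto hc.neg neg_lub.bddAbove
  obtain rfl : f = 0 := hf.unique neg_lub
  refine ⟨i, tendsto_dL0_zero ?_⟩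
  filter_upwards [hi, AEEqFun.coeFn_zero (β := ℝ) (μ := μ),
    ae_all_iff.2 fun n => AEEqFun.coeFn_neg (c (i n))] with x hx hzero hneg
  simpa [hzero, hneg] using hx.neg

end Distance

section PointwiseNorm

variable {μ : Measure X} [SFinite μ] {M : Type*} [AddCommGroup M] [Module (L0 μ) M]
  [BanachMod μ M]

theorem pn_nonneg (v : M) : 0 ≤ pn μ v := BanachMod.pn_nonneg v

theorem pn_eq_zero {v : M} : pn μ v = 0 ↔ v = 0 := BanachMod.pn_eq_zero v

theorem pn_zero : pn μ (0 : M) = 0 := pn_eq_zero.2 rfl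

theorem pn_add_le (v w : M) : pn μ (v + w) ≤ pn μ v + pn μ w := BanachMod.pn_add_le v w

theorem pn_smul (f : L0 μ) (v : M) : pn μ (f • v) = |f| * pn μ v := BanachMod.pn_smul f v

theorem pn_neg (v : M) : pn μ (-v) = pn μ v := by
  rw [← neg_one_smul (L0 μ) v, pn_smul, abs_neg, abs_of_nonneg (zero_le_one' (L0 μ)), one_mul]

theorem pn_sub_comm (v w : M) : pn μ (v - w) = pn μ (w - v) := by
  rw [← pn_neg, neg_sub]

theorem pn_sub_le_add (u v w : M) : pn μ (u - w) ≤ pn μ (u - v) + pn μ (v - w) := by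
  simpa only [sub_add_sub_cancel] using pn_add_le (μ := μ) (u - v) (v - w)

theorem pn_sum_le {I : Type*} (F : Finset I) (v : I → M) :
    pn μ (∑ i ∈ F, v i) ≤ ∑ i ∈ F, pn μ (v i) :=
  Finset.le_sum_of_subadditive (pn μ) pn_zero.le pn_add_le F v

theorem pn_smul_le_abs {v : M} (hv : pn μ v ≤ 1) (f : L0 μ) : pn μ (f • v) ≤ |f| := by
  rw [pn_smul]
  exact mul_le_of_le_one_right (abs_nonneg f) hv

theorem exists_mul_self_eq_and_pn_smul_eq (w : M) :
    ∃ v : M, pn μ v * pn μ v = pn μ v ∧ pn μ w • v = w := by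
  set g : L0 μ := pn μ w
  have cancel : g * g⁻¹ * g = g := L0.mul_inv_mul_cancel g
  have idem : g * g⁻¹ * (g * g⁻¹) = g * g⁻¹ := by rw [← mul_assoc, cancel]
  refine ⟨g⁻¹ • w, ?_, ?_⟩
  · have pn_v : pn μ (g⁻¹ • w) = g * g⁻¹ := by
      rw [pn_smul, abs_of_nonneg (L0.inv_nonneg (pn_nonneg w)), mul_comm]
    rw [pn_v, idem]
  · have pn_compl : pn μ ((1 - g * g⁻¹) • w) = 0 := by
      rw [pn_smul, abs_of_nonneg (sub_nonneg.2 (L0.le_one_of_mul_self_eq idem)), sub_mul, one_mul]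
      exact sub_eq_zero.2 cancel.symm
    rw [pn_eq_zero, sub_smul, one_smul, sub_eq_zero] at pn_compl
    rw [smul_smul, ← pn_compl]

end PointwiseNorm

section OrderConvergence

variable {μ : Measure X} [SFinite μ] {M : Type*} [AddCommGroup M] [Module (L0 μ) M]
  [BanachMod μ M] {ι : Type*} [Preorder ι]

variable (μ) in
/-- Order convergence of a net `u` in a Banach `L⁰(𝕏)`-module to `s`: the pointwise norms
`|u i - s|` are dominated by a family decreasing to `0` in `L⁰(𝕏)`. -/
def OrderTendsto (u : ι → M) (s : M) : Prop :=
  ∃ c : ι → L0 μ, Antitone c ∧ IsGLB (range c) 0 ∧ ∀ i, pn μ (u i - s) ≤ c i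

theorem OrderTendsto.add [IsDirectedOrder ι] {u v : ι → M} {s t : M} (hu : OrderTendsto μ u s)
    (hv : OrderTendsto μ v t) : OrderTendsto μ (fun i => u i + v i) (s + t) := by
  obtain ⟨c, hc_anti, hc, huc⟩ := hu
  obtain ⟨d, hd_anti, hd, hvd⟩ := hv
  refine ⟨fun i => c i + d i, hc_anti.add hd_anti, ?_, fun i => ?_⟩
  · simpa only [add_zero] using isGLB_range_add_of_antitone hc_anti hd_anti hc hd
  · rw [add_sub_add_comm]
    exact (pn_add_le _ _).trans (add_le_add (huc i) (hvd i))

theorem OrderTendsto.const_smul {u : ι → M} {s : M} (hu : OrderTendsto μ u s) (g : L0 μ) :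
    OrderTendsto μ (fun i => g • u i) (g • s) := by
  obtain ⟨c, hc_anti, hc, huc⟩ := hu
  refine ⟨fun i => |g| * c i, fun i j hij => mul_le_mul_of_nonneg_left (hc_anti hij) (abs_nonneg g),
    L0.isGLB_range_const_mul hc (abs_nonneg g), fun i => ?_⟩
  rw [← smul_sub, pn_smul]
  exact mul_le_mul_of_nonneg_left (huc i) (abs_nonneg g)

theorem OrderTendsto.pn_le {u : ι → M} {s : M} (hu : OrderTendsto μ u s) {b : L0 μ}
    (hb : ∀ i, pn μ (u i) ≤ b) : pn μ s ≤ b := by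
  obtain ⟨c, -, hc, huc⟩ := hu
  refine sub_nonpos.1 (hc.2 ?_)
  rintro _ ⟨i, rfl⟩
  rw [sub_le_iff_le_add]
  calc pn μ s = pn μ ((s - u i) + u i) := by rw [sub_add_cancel]
    _ ≤ pn μ (s - u i) + pn μ (u i) := pn_add_le _ _
    _ ≤ c i + b := add_le_add ((pn_sub_comm s (u i)).trans_le (huc i)) (hb i)

theorem exists_tendsto_dL0_of_pn_sub_le {u : ℕ → M} {c : ℕ → L0 μ}
    (hc : Tendsto (fun n => dL0 μ (c n) 0) atTop (𝓝 0))
    (huc : ∀ m n, pn μ (u m - u n) ≤ c m + c n) :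
    ∃ s : M, Tendsto (fun n => dL0 μ (pn μ (u n - s)) 0) atTop (𝓝 0) := by
  refine BanachMod.complete u fun ε hε => ?_
  obtain ⟨N, hN⟩ := eventually_atTop.1 (hc.eventually_lt_const (half_pos hε))
  refine ⟨N, fun m hm n hn => ?_⟩
  calc dL0 μ (pn μ (u m - u n)) 0 ≤ dL0 μ (c m + c n) 0 :=
        dL0_le_dL0_of_abs_le (abs_le_abs_of_nonneg (pn_nonneg _) (huc m n))
    _ ≤ dL0 μ (c m) 0 + dL0 μ (c n) 0 := dL0_add_le _ _
    _ < ε / 2 + ε / 2 := add_lt_add (hN m hm) (hN n hn)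
    _ = ε := add_halves ε

theorem exists_orderTendsto_of_forall_pn_sub_le [IsDirectedOrder ι] [Nonempty ι] {u : ι → M}
    {c : ι → L0 μ} (hc_anti : Antitone c) (hc : IsGLB (range c) 0)
    (huc : ∀ i j, i ≤ j → pn μ (u j - u i) ≤ c i) : ∃ s : M, OrderTendsto μ u s := by
  have huc' : ∀ i j, pn μ (u i - u j) ≤ c i + c j := fun i j => by
    obtain ⟨k, hik, hjk⟩ := exists_ge_ge i j
    refine (pn_sub_le_add _ (u k) _).trans (add_le_add ?_ (huc j k hjk))
    rw [pn_sub_comm]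
    exact huc i k hik
  obtain ⟨i, hi⟩ := exists_seq_tendsto_dL0_of_isGLB hc_anti hc
  obtain ⟨s, hs⟩ := exists_tendsto_dL0_of_pn_sub_le hi fun m n => huc' (i m) (i n)
  refine ⟨s, c, hc_anti, hc, fun j => ?_⟩
  refine le_of_forall_le_add_of_tendsto_dL0 (h := fun n => c (i n) + pn μ (u (i n) - s))
    (fun n => ?_) ?_
  · calc pn μ (u j - s) ≤ pn μ (u j - u (i n)) + pn μ (u (i n) - s) := pn_sub_le_add _ _ _
      _ ≤ c j + c (i n) + pn μ (u (i n) - s) := by gcongr; exact huc' j (i n)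
      _ = c j + (c (i n) + pn μ (u (i n) - s)) := add_assoc _ _ _
  · exact squeeze_zero (fun n => dL0_nonneg _ _) (fun n => dL0_add_le _ _)
      (by simpa only [add_zero] using hi.add hs)

end OrderConvergence

section PartialSums

variable {μ : Measure X} {I : Type*}

theorem l1PartialSumsF_eq_range (a : I → L0 μ) :
    l1PartialSumsF μ a = range fun F : Finset I => ∑ i ∈ F, |a i| := by
  ext g
  exact exists_congr fun F => eq_comm

theorem isLUB_l1PartialSumsF_of_ne_finset_zero {a : I → L0 μ} {S : Finset I}
    (ha : ∀ i ∉ S, a i = 0) : IsLUB (l1PartialSumsF μ a) (∑ i ∈ S, |a i|) := by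
  classical
  refine IsGreatest.isLUB ⟨⟨S, rfl⟩, ?_⟩
  rintro _ ⟨F, rfl⟩
  calc ∑ i ∈ F, |a i| ≤ ∑ i ∈ S ∪ F, |a i| := Finset.sum_le_sum_of_subset_of_nonneg
        Finset.subset_union_right fun i _ _ => abs_nonneg _
    _ = ∑ i ∈ S, |a i| := (Finset.sum_subset Finset.subset_union_left
        fun i _ hi => by rw [ha i hi, abs_zero]).symm

end PartialSums

section Sums

variable {μ : Measure X} [SFinite μ] {M : Type*} [AddCommGroup M] [Module (L0 μ) M]
  [BanachMod μ M] {I : Type*}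

theorem sumUB_eq_image (v : I → M) (s : M) (F : Finset I) :
    sumUB μ v s F = (fun G => pn μ (∑ i ∈ G, v i - s)) '' Ici F := by
  classical
  ext g
  constructor
  · rintro ⟨G, hG, rfl⟩
    exact ⟨F ∪ G, Finset.subset_union_left, by
      dsimp only
      rw [pn_sub_comm, Finset.sum_union hG.symm]⟩
  · rintro ⟨G, hFG, rfl⟩
    exact ⟨G \ F, Finset.sdiff_disjoint, by
      dsimp only
      rw [pn_sub_comm, add_comm, Finset.sum_sdiff hFG]⟩

theorem hasSumMod_iff_orderTendsto {v : I → M} {s : M} :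
    HasSumMod μ v s ↔ OrderTendsto μ (fun F : Finset I => ∑ i ∈ F, v i) s := by
  simp only [HasSumMod, sumUB_eq_image]
  constructor
  · rintro ⟨b, hb, hb_glb⟩
    exact ⟨b, fun F G hFG => (hb G).mono (hb F) (image_mono (Ici_subset_Ici.2 hFG)), hb_glb,
      fun F => (hb F).1 ⟨F, self_mem_Ici, rfl⟩⟩
  · rintro ⟨c, hc_anti, hc, hvc⟩
    have le_c : ∀ F, c F ∈ upperBounds ((fun G => pn μ (∑ i ∈ G, v i - s)) '' Ici F) := by
      rintro F _ ⟨G, hFG, rfl⟩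
      exact (hvc G).trans (hc_anti hFG)
    choose b hb using fun F => L0.exists_isLUB (nonempty_Ici.image _) ⟨c F, le_c F⟩
    refine ⟨b, hb, ?_, fun l hl => hc.2 ?_⟩
    · rintro _ ⟨F, rfl⟩
      exact (pn_nonneg _).trans ((hb F).1 ⟨F, self_mem_Ici, rfl⟩)
    · rintro _ ⟨F, rfl⟩
      exact (hl ⟨F, rfl⟩).trans ((hb F).2 (le_c F))

theorem HasSumMod.add {v w : I → M} {s t : M} (hv : HasSumMod μ v s) (hw : HasSumMod μ w t) :
    HasSumMod μ (fun i => v i + w i) (s + t) := by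
  classical
  rw [hasSumMod_iff_orderTendsto] at *
  simpa only [Finset.sum_add_distrib] using hv.add hw

theorem HasSumMod.const_smul {v : I → M} {s : M} (hv : HasSumMod μ v s) (g : L0 μ) :
    HasSumMod μ (fun i => g • v i) (g • s) := by
  rw [hasSumMod_iff_orderTendsto] at *
  simpa only [Finset.smul_sum] using hv.const_smul g

theorem HasSumMod.pn_le {v : I → M} {s : M} (hv : HasSumMod μ v s) {b : L0 μ}
    (hb : ∀ F : Finset I, ∑ i ∈ F, pn μ (v i) ≤ b) : pn μ s ≤ b :=
  (hasSumMod_iff_orderTendsto.1 hv).pn_le fun F => (pn_sum_le F v).trans (hb F)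

theorem hasSumMod_sum_of_ne_finset_zero {v : I → M} {S : Finset I} (hv : ∀ i ∉ S, v i = 0) :
    HasSumMod μ v (∑ i ∈ S, v i) := by
  classical
  refine hasSumMod_iff_orderTendsto.2 ⟨fun F => ∑ i ∈ S \ F, pn μ (v i), ?_, ⟨?_, ?_⟩, ?_⟩
  · exact fun F G hFG => Finset.sum_le_sum_of_subset_of_nonneg
      (Finset.sdiff_subset_sdiff le_rfl hFG) fun i _ _ => pn_nonneg _
  · rintro _ ⟨F, rfl⟩
    exact Finset.sum_nonneg fun i _ => pn_nonneg _
  · exact fun l hl => (hl ⟨S, rfl⟩).trans_eq (by simp)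
  · intro F
    have outside_S : ∑ i ∈ F \ S, v i = 0 :=
      Finset.sum_eq_zero fun i hi => hv i (Finset.mem_sdiff.1 hi).2
    rw [← Finset.sum_sdiff_sub_sum_sdiff, outside_S, zero_sub, pn_neg]
    exact pn_sum_le _ v

theorem summableMod_of_pn_le_abs {v : I → M} {a : I → L0 μ} (ha : Meml1F μ a)
    (hva : ∀ i, pn μ (v i) ≤ |a i|) : SummableMod μ v := by
  classical
  obtain ⟨b, hb⟩ := ha
  rw [l1PartialSumsF_eq_range] at hb
  simp only [SummableMod, hasSumMod_iff_orderTendsto]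
  refine exists_orderTendsto_of_forall_pn_sub_le (c := fun F => b - ∑ i ∈ F, |a i|) ?_
    (isGLB_range_const_sub hb) fun F G hFG => ?_
  · exact fun F G hFG => sub_le_sub_left
      (Finset.sum_le_sum_of_subset_of_nonneg hFG fun i _ _ => abs_nonneg _) b
  · calc pn μ (∑ i ∈ G, v i - ∑ i ∈ F, v i) = pn μ (∑ i ∈ G \ F, v i) := by
          rw [Finset.sum_sdiff_eq_sub hFG]
      _ ≤ ∑ i ∈ G \ F, |a i| := (pn_sum_le _ v).trans (Finset.sum_le_sum fun i _ => hva i)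
      _ = ∑ i ∈ G, |a i| - ∑ i ∈ F, |a i| := Finset.sum_sdiff_eq_sub hFG
      _ ≤ b - ∑ i ∈ F, |a i| := sub_le_sub_right (hb.1 ⟨G, rfl⟩) _

theorem exists_hasSumMod_smul_and_isLUB {e : I → M} {w : M} (hw : ∃ i, pn μ w • e i = w) :
    ∃ f : I → L0 μ, HasSumMod μ (fun i => f i • e i) w ∧
      IsLUB (l1PartialSumsF μ f) (pn μ w) := by
  classical
  obtain ⟨i, hi⟩ := hw
  set f : I → L0 μ := Pi.single i (pn μ w)
  have f_self : f i = pn μ w := Pi.single_eq_same i _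
  have f_eq_zero : ∀ j ∉ ({i} : Finset I), f j = 0 := fun j hj =>
    Pi.single_eq_of_ne (Finset.notMem_singleton.1 hj) _
  refine ⟨f, ?_, ?_⟩
  · have h := hasSumMod_sum_of_ne_finset_zero (μ := μ) (v := fun j => f j • e j) (S := {i})
      fun j hj => by rw [f_eq_zero j hj, zero_smul]
    rwa [Finset.sum_singleton, f_self, hi] at h
  · simpa only [Finset.sum_singleton, f_self, abs_of_nonneg (pn_nonneg w)] using
      isLUB_l1PartialSumsF_of_ne_finset_zero f_eq_zero

theorem l1_sphere_quotient_general {e : I → M} (he : ∀ i, pn μ (e i) ≤ 1)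
    (he_polar : ∀ w : M, ∃ i, pn μ w • e i = w) :
    (∀ f : I → L0 μ, Meml1F μ f → SummableMod μ (fun i => f i • e i))
    ∧ (∀ (f f' : I → L0 μ) (s s' : M),
        HasSumMod μ (fun i => f i • e i) s → HasSumMod μ (fun i => f' i • e i) s' →
        HasSumMod μ (fun i => (f i + f' i) • e i) (s + s'))
    ∧ (∀ (g : L0 μ) (f : I → L0 μ) (s : M), HasSumMod μ (fun i => f i • e i) s →
        HasSumMod μ (fun i => (g * f i) • e i) (g • s))
    ∧ (∀ (f : I → L0 μ) (b : L0 μ) (s : M),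
        IsLUB (l1PartialSumsF μ f) b → HasSumMod μ (fun i => f i • e i) s → pn μ s ≤ b)
    ∧ (∀ w : M, ∃ f : I → L0 μ, Meml1F μ f ∧ HasSumMod μ (fun i => f i • e i) w)
    ∧ (∀ w : M, IsGLB {g : L0 μ | ∃ f : I → L0 μ,
        HasSumMod μ (fun i => f i • e i) w ∧ IsLUB (l1PartialSumsF μ f) g} (pn μ w)) := by
  have pn_smul_le : ∀ (f : I → L0 μ) i, pn μ (f i • e i) ≤ |f i| := fun f i =>
    pn_smul_le_abs (he i) (f i)
  have pn_le : ∀ (f : I → L0 μ) (b : L0 μ) (s : M),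
      IsLUB (l1PartialSumsF μ f) b → HasSumMod μ (fun i => f i • e i) s → pn μ s ≤ b :=
    fun f b s hb hs => hs.pn_le fun F =>
      (Finset.sum_le_sum fun i _ => pn_smul_le f i).trans (hb.1 ⟨F, rfl⟩)
  refine ⟨fun f hf => summableMod_of_pn_le_abs hf (pn_smul_le f), fun f f' s s' hs hs' => ?_,
    fun g f s hs => ?_, pn_le, fun w => ?_, fun w => IsLeast.isGLB ⟨?_, ?_⟩⟩
  · simpa only [add_smul] using hs.add hs'
  · simpa only [mul_smul] using hs.const_smul g
  · obtain ⟨f, hf_sum, hf_lub⟩ := exists_hasSumMod_smul_and_isLUB (he_polar w)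
    exact ⟨f, ⟨_, hf_lub⟩, hf_sum⟩
  · exact exists_hasSumMod_smul_and_isLUB (he_polar w)
  · rintro g ⟨f, hf_sum, hf_lub⟩
    exact pn_le f g w hf_lub hf_sum

end Sums

/-- Let `𝕏` be a σ-finite measure space and `ℳ` a Banach `L⁰(𝕏)`-module.
For every `f = (f_v)_{v ∈ 𝕊_ℳ} ∈ ℓ₁(𝕊_ℳ, L⁰(𝕏))` the family `{f_v • v}_{v ∈ 𝕊_ℳ}` is
summable in `ℳ`, and the map `φ(f) := ∑_{v ∈ 𝕊_ℳ} f_v • v` is a quotient operator from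
`ℓ₁(𝕊_ℳ, L⁰(𝕏))` onto `ℳ` (in particular, `ℳ ≅ ℓ₁(𝕊_ℳ, L⁰(𝕏)) / ker φ`). The unit sphere
`𝕊_ℳ = {v : |v|(x) ∈ {0,1} a.e.}` is encoded by the idempotency `|v|·|v| = |v|`. -/
theorem l1_sphere_quotient
    (μ : Measure X) [SigmaFinite μ]
    (M : Type*) [AddCommGroup M] [Module (L0 μ) M] [BanachMod μ M] :
    -- summability of `{f_v • v}` for every `f ∈ ℓ₁(𝕊_ℳ, L⁰(𝕏))`
    (∀ f : {v : M // pn μ v * pn μ v = pn μ v} → L0 μ, Meml1F μ f →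
      SummableMod μ (fun v : {v : M // pn μ v * pn μ v = pn μ v} => f v • (v : M)))
    -- `φ` is additive and `L⁰(𝕏)`-linear
    ∧ (∀ (f f' : {v : M // pn μ v * pn μ v = pn μ v} → L0 μ) (s s' : M),
        HasSumMod μ (fun v => f v • (v : M)) s → HasSumMod μ (fun v => f' v • (v : M)) s' →
        HasSumMod μ (fun v => (f v + f' v) • (v : M)) (s + s'))
    ∧ (∀ (g : L0 μ) (f : {v : M // pn μ v * pn μ v = pn μ v} → L0 μ) (s : M),
        HasSumMod μ (fun v => f v • (v : M)) s →
        HasSumMod μ (fun v => (g * f v) • (v : M)) (g • s))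
    -- `φ` is bounded: `|φ f| ≤ |f|₁`
    ∧ (∀ (f : {v : M // pn μ v * pn μ v = pn μ v} → L0 μ) (b : L0 μ) (s : M),
        IsLUB (l1PartialSumsF μ f) b → HasSumMod μ (fun v => f v • (v : M)) s →
        pn μ s ≤ b)
    -- `φ` is surjective
    ∧ (∀ w : M, ∃ f : {v : M // pn μ v * pn μ v = pn μ v} → L0 μ,
        Meml1F μ f ∧ HasSumMod μ (fun v => f v • (v : M)) w)
    -- `φ` is a quotient operator: `|w| = ⋀ { |f|₁ : φ f = w }`
    ∧ (∀ w : M, IsGLB {g : L0 μ | ∃ f : {v : M // pn μ v * pn μ v = pn μ v} → L0 μ,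
        HasSumMod μ (fun v => f v • (v : M)) w ∧ IsLUB (l1PartialSumsF μ f) g}
        (pn μ w)) :=
  l1_sphere_quotient_general (fun v => L0.le_one_of_mul_self_eq v.2) fun w =>
    let ⟨v, hv, hvw⟩ := exists_mul_self_eq_and_pn_smul_eq w
    ⟨⟨v, hv⟩, hvw⟩

end Paper
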